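/- arXiv:1510.08118 — 2 statements merged into one kernel-verified Lean document; each statement's English description precedes it below -/
import Mathlib

section
/- Let n ≥ 2 and let p be a natural number with 1 ≤ p ≤ n−1 and n ≠ 2p, and let α, α', β, β', r, c > 0 be reals. Then S(n,p,α,β,r) = S(n,p,α',β',c·r) (as functions ℝ → ℕ) if and only if α' = c²α and β' = c²β. -/
open scoped Classical

/-- The spectrum, with multiplicities, of the generalized Hodge-Laplace operator
`F_{αβ} = α dδ + β δd` on `p`-forms on the round `n`-sphere of radius `r`
(Theorem 4.12 and Proposition 4.15): the eigenvalue `λ(k) = (β/r²)(k+p)(k+n-p-1)` for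
`k ≥ 1` occurs with multiplicity `dim V_k^p` and the eigenvalue
`μ(k) = (α/r²)(k+p)(k+n-p+1)` for `k ≥ 0` with multiplicity `dim W_k^p`. -/
noncomputable def sphereSpec (n p : ℕ) (α β r : ℝ) : ℝ → ℕ := fun x =>
  (∑' k : ℕ,
      if 1 ≤ k ∧ (β / r ^ 2) * (((k + p) * (k + n - p - 1) : ℕ) : ℝ) = x then
        ((n + k - 1).factorial * (n + 2 * k - 1)) /
          (p.factorial * (k - 1).factorial * (n - p - 1).factorial * (n + k - p - 1) * (k + p))
      else 0) +
  (∑' k : ℕ,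
      if (α / r ^ 2) * (((k + p) * (k + n - p + 1) : ℕ) : ℝ) = x then
        ((n + k).factorial * (n + 2 * k + 1)) /
          ((p - 1).factorial * k.factorial * (n - p).factorial * (n + k - p + 1) * (k + p))
      else 0)

/-!
The spectrum is a superposition of two dilated fixed spectra, one for coclosed and one for closed
`p`-forms, whose lowest eigenvalues carry the multiplicities `(n+1).choose (p+1)` and
`(n+1).choose p`; these differ because `n ≠ 2p`. If both dilation factors changed, the bottom of
the total spectrum would be coclosed on one side and closed on the other, with different
multiplicities. So one factor is unchanged, the corresponding parts cancel, and the bottom of what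
remains determines the other factor.
-/

open Function
open scoped Nat

section Superposition

lemma eq_or_eq_of_add_eq_of_isLeast_support {X M : Type*} [LinearOrder X] [AddCommMonoid M]
    [PartialOrder M] [CanonicallyOrderedAdd M] {f f' g g' : X → M} {A A' B B' : X}
    (hf : IsLeast (support f) A) (hf' : IsLeast (support f') A')
    (hg : IsLeast (support g) B) (hg' : IsLeast (support g') B')
    (hff' : f A = f' A') (hgg' : g B = g' B') (hfg : f A ≠ g B) (h : f + g = f' + g') :
    A = A' ∨ B = B' := by
  wlog hA : A ≤ A' generalizing f f' g g' A A' B B'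
  · exact (this hf' hf hg' hg hff'.symm hgg'.symm (hff' ▸ hgg' ▸ hfg) h.symm
      (le_of_not_ge hA)).imp Eq.symm Eq.symm
  have vanish {u : X → M} {a x : X} (hu : IsLeast (support u) a) (hx : x < a) : u x = 0 :=
    notMem_support.mp fun hmem => hx.not_ge (hu.2 hmem)
  have h_apply (x : X) : f x + g x = f' x + g' x := congrFun h x
  by_contra! hne
  have hAA' : A < A' := hA.lt_of_ne hne.1
  have hB'A : B' ≤ A := hg'.2 fun hg'A => hf.1 <| by
    have hsum := h_apply A
    rw [vanish hf' hAA', hg'A, add_zero] at hsum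
    exact (add_eq_zero.mp hsum).1
  rcases hne.2.lt_or_gt with hBB' | hB'B
  · have hsum := h_apply B
    have hBA : B < A := hBB'.trans_le hB'A
    rw [vanish hf hBA, vanish hf' (hBA.trans hAA'), vanish hg' hBB', zero_add, zero_add] at hsum
    exact hg.1 hsum
  · have hfB' : f B' = g' B' := by
      have hsum := h_apply B'
      rwa [vanish hg hB'B, vanish hf' (hB'A.trans_lt hAA'), add_zero, zero_add] at hsum
    have hAB' : A ≤ B' := hf.2 (mem_support.mpr (hfB' ▸ hg'.1))
    obtain rfl : A = B' := hAB'.antisymm hB'A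
    exact hfg (hfB'.trans hgg'.symm)

variable {K : Type*} [Field K] [LinearOrder K] [IsStrictOrderedRing K]

lemma isLeast_support_comp_div {M : Type*} [Zero M] {f : K → M} {A b : K}
    (hf : IsLeast (support f) A) (hb : 0 < b) :
    IsLeast (support fun x => f (x / b)) (A * b) :=
  ⟨by simpa [hb.ne'] using hf.1, fun _ hx => (le_div_iff₀ hb).mp (hf.2 hx)⟩

lemma eq_of_comp_div_eq_of_isLeast_support {M : Type*} [Zero M] {f : K → M} {A b b' : K}
    (hf : IsLeast (support f) A) (hA : A ≠ 0) (hb : 0 < b) (hb' : 0 < b')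
    (h : ∀ x, f (x / b) = f (x / b')) : b = b' := by
  have hleast := isLeast_support_comp_div hf hb
  rw [funext h] at hleast
  exact mul_left_cancel₀ hA (hleast.unique (isLeast_support_comp_div hf hb'))

lemma comp_div_add_comp_div_eq_iff {M : Type*} [AddCommMonoid M] [IsCancelAdd M] [PartialOrder M]
    [CanonicallyOrderedAdd M] {f g : K → M} {A B a a' b b' : K}
    (hf : IsLeast (support f) A) (hg : IsLeast (support g) B) (hA : A ≠ 0) (hB : B ≠ 0)
    (hfg : f A ≠ g B) (ha : 0 < a) (ha' : 0 < a') (hb : 0 < b) (hb' : 0 < b') :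
    (∀ x, f (x / a) + g (x / b) = f (x / a') + g (x / b')) ↔ a = a' ∧ b = b' := by
  refine ⟨fun h => ?_, by rintro ⟨rfl, rfl⟩ x; rfl⟩
  have hbottom : A * a = A * a' ∨ B * b = B * b' :=
    eq_or_eq_of_add_eq_of_isLeast_support
      (isLeast_support_comp_div hf ha) (isLeast_support_comp_div hf ha')
      (isLeast_support_comp_div hg hb) (isLeast_support_comp_div hg hb')
      (by simp only [mul_div_cancel_right₀ _ ha.ne', mul_div_cancel_right₀ _ ha'.ne'])
      (by simp only [mul_div_cancel_right₀ _ hb.ne', mul_div_cancel_right₀ _ hb'.ne'])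
      (by simpa only [mul_div_cancel_right₀ _ ha.ne', mul_div_cancel_right₀ _ hb.ne'] using hfg)
      (funext h)
  rcases hbottom with hAa | hBb
  · obtain rfl := mul_left_cancel₀ hA hAa
    exact ⟨rfl, eq_of_comp_div_eq_of_isLeast_support hg hB hb hb' fun x => add_left_cancel (h x)⟩
  · obtain rfl := mul_left_cancel₀ hB hBb
    exact ⟨eq_of_comp_div_eq_of_isLeast_support hf hA ha ha' fun x => add_right_cancel (h x), rfl⟩

end Superposition

section WeightedSpectrum

variable {ι X M : Type*} [AddCommMonoid M] [TopologicalSpace M]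

/-- The weighted spectrum of a family of eigenvalues `ev` with multiplicities `mult`: the function
sending `x` to the total multiplicity with which it occurs. -/
noncomputable def weightedSpectrum (ev : ι → X) (mult : ι → M) (x : X) : M :=
  ∑' i, if ev i = x then mult i else 0

lemma weightedSpectrum_apply_of_injective {ev : ι → X} (hev : Injective ev) (mult : ι → M)
    (i : ι) : weightedSpectrum ev mult (ev i) = mult i := by
  simp only [weightedSpectrum, hev.eq_iff, tsum_ite_eq]

lemma support_weightedSpectrum_subset (ev : ι → X) (mult : ι → M) :
    support (weightedSpectrum ev mult) ⊆ Set.range ev := by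
  intro x hx
  contrapose! hx
  have hne (i : ι) : ev i ≠ x := fun hi => hx ⟨i, hi⟩
  simp [weightedSpectrum, hne]

lemma isLeast_support_weightedSpectrum [LinearOrder ι] [Preorder X] {ev : ι → X}
    (hev : StrictMono ev) {mult : ι → M} {i : ι} (hi : IsBot i) (hmult : mult i ≠ 0) :
    IsLeast (support (weightedSpectrum ev mult)) (ev i) := by
  refine ⟨by simpa [weightedSpectrum_apply_of_injective hev.injective] using hmult, fun x hx => ?_⟩
  obtain ⟨j, rfl⟩ := support_weightedSpectrum_subset ev mult hx
  exact hev.monotone (hi j)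

end WeightedSpectrum

section CoclosedSpectrum

/-- The `k`-th positive eigenvalue, `k ≥ 0`, of `δd` on the coclosed `p`-forms of the unit sphere
of dimension `n = p + q + 1`. In these parameters there is no truncated subtraction, and Hodge
duality becomes the symmetry between `p` and `q`. -/
def coclosedEigenvalue (p q k : ℕ) : ℕ := (k + p + 1) * (k + q + 1)

/-- The multiplicity of `coclosedEigenvalue p q k`. -/
def coclosedMultiplicity (p q k : ℕ) : ℕ :=
  ((p + q + k + 1)! * (p + q + 2 * k + 2)) / (p ! * k ! * q ! * (k + q + 1) * (k + p + 1))

/-- The positive spectrum of `δd` on the coclosed `p`-forms of the unit sphere of dimension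
`p + q + 1`. It is also the positive spectrum of `dδ` on the closed `(p + 1)`-forms, because `d`
identifies the eigenspaces; in the notation of `sphereSpec`, `dim W_k^{p+1} = dim V_{k+1}^p`. -/
noncomputable def coclosedSpectrum (p q : ℕ) : ℝ → ℕ :=
  weightedSpectrum (fun k => (coclosedEigenvalue p q k : ℝ)) (coclosedMultiplicity p q)

lemma coclosedEigenvalue_strictMono (p q : ℕ) : StrictMono (coclosedEigenvalue p q) :=
  fun _ _ hkl => Nat.mul_lt_mul'' (by omega) (by omega)

lemma cast_coclosedEigenvalue_strictMono (p q : ℕ) :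
    StrictMono fun k => (coclosedEigenvalue p q k : ℝ) :=
  Nat.strictMono_cast.comp (coclosedEigenvalue_strictMono p q)

lemma coclosedMultiplicity_zero (p q : ℕ) :
    coclosedMultiplicity p q 0 = (p + q + 2).choose (p + 1) := by
  rw [coclosedMultiplicity, Nat.choose_eq_factorial_div_factorial (by omega),
    show p + q + 2 - (p + 1) = q + 1 by omega]
  congr 1
  · rw [Nat.factorial_succ (p + q + 1)]; ring
  · rw [Nat.factorial_succ p, Nat.factorial_succ q, Nat.factorial_zero]; ring

lemma coclosedSpectrum_lowest (p q : ℕ) :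
    coclosedSpectrum p q (coclosedEigenvalue p q 0) = (p + q + 2).choose (p + 1) :=
  (weightedSpectrum_apply_of_injective (cast_coclosedEigenvalue_strictMono p q).injective _ 0).trans
    (coclosedMultiplicity_zero p q)

lemma isLeast_support_coclosedSpectrum (p q : ℕ) :
    IsLeast (support (coclosedSpectrum p q)) (coclosedEigenvalue p q 0) :=
  isLeast_support_weightedSpectrum (cast_coclosedEigenvalue_strictMono p q) (fun k => k.zero_le)
    (coclosedMultiplicity_zero p q ▸ (Nat.choose_pos (by omega)).ne')

lemma cast_coclosedEigenvalue_ne_zero (p q k : ℕ) : (coclosedEigenvalue p q k : ℝ) ≠ 0 := by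
  rw [coclosedEigenvalue]; positivity

end CoclosedSpectrum

lemma sphereSpec_eq_coclosedSpectrum_add (p q : ℕ) {α β r : ℝ} (hα : α ≠ 0) (hβ : β ≠ 0)
    (hr : r ≠ 0) (x : ℝ) :
    sphereSpec (p + q + 2) (p + 1) α β r x =
      coclosedSpectrum (p + 1) q (x / (β / r ^ 2)) +
        coclosedSpectrum p (q + 1) (x / (α / r ^ 2)) := by
  have rescale {t : ℝ} (ht : t ≠ 0) (m : ℕ) : t / r ^ 2 * m = x ↔ (m : ℝ) = x / (t / r ^ 2) := by
    rw [eq_div_iff (by positivity), mul_comm]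
  simp only [sphereSpec, coclosedSpectrum, weightedSpectrum, coclosedEigenvalue,
    coclosedMultiplicity, rescale hα, rescale hβ]
  congr 1
  · rw [← (add_left_injective 1).tsum_eq]
    · refine tsum_congr fun k => ?_
      rw [show k + 1 + (p + 1) = k + (p + 1) + 1 by omega,
        show k + 1 + (p + q + 2) - (p + 1) - 1 = k + q + 1 by omega,
        show p + q + 2 + (k + 1) - 1 = p + 1 + q + k + 1 by omega,
        show p + q + 2 + 2 * (k + 1) - 1 = p + 1 + q + 2 * k + 2 by omega,
        show p + q + 2 - (p + 1) - 1 = q by omega,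
        show p + q + 2 + (k + 1) - (p + 1) - 1 = k + q + 1 by omega, Nat.add_sub_cancel]
      exact if_congr (and_iff_right (by omega)) rfl rfl
    · rintro (_ | k) hk
      · simp at hk
      · exact ⟨k, rfl⟩
  · refine tsum_congr fun k => ?_
    rw [show k + (p + 1) = k + p + 1 by omega,
      show k + (p + q + 2) - (p + 1) + 1 = k + (q + 1) + 1 by omega,
      show p + q + 2 + k = p + (q + 1) + k + 1 by omega,
      show p + q + 2 + 2 * k + 1 = p + (q + 1) + 2 * k + 2 by omega,
      show p + q + 2 - (p + 1) = q + 1 by omega,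
      show p + (q + 1) + k + 1 - (p + 1) + 1 = k + (q + 1) + 1 by omega, Nat.add_sub_cancel]
    exact if_congr Iff.rfl rfl rfl

lemma choose_succ_ne_choose {n k : ℕ} (hk : k ≤ n) (hn : n ≠ 2 * k + 1) :
    n.choose (k + 1) ≠ n.choose k := by
  intro h
  have hmul := Nat.choose_succ_right_eq n k
  rw [h] at hmul
  have := Nat.eq_of_mul_eq_mul_left (Nat.choose_pos hk) hmul
  omega

lemma sphereSpec_eq_iff {n p : ℕ} (hp : 1 ≤ p) (hpn : p < n) (hn2p : n ≠ 2 * p)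
    {α α' β β' r r' : ℝ} (hα : 0 < α) (hα' : 0 < α') (hβ : 0 < β) (hβ' : 0 < β')
    (hr : r ≠ 0) (hr' : r' ≠ 0) :
    sphereSpec n p α β r = sphereSpec n p α' β' r' ↔
      β / r ^ 2 = β' / r' ^ 2 ∧ α / r ^ 2 = α' / r' ^ 2 := by
  obtain ⟨p, rfl⟩ := Nat.exists_eq_add_of_le' hp
  obtain ⟨q, rfl⟩ : ∃ q, n = p + q + 2 := ⟨n - p - 2, by omega⟩
  have lowest_ne : coclosedSpectrum (p + 1) q (coclosedEigenvalue (p + 1) q 0) ≠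
      coclosedSpectrum p (q + 1) (coclosedEigenvalue p (q + 1) 0) := by
    rw [coclosedSpectrum_lowest, coclosedSpectrum_lowest,
      show p + 1 + q + 2 = p + (q + 1) + 2 by ring]
    exact choose_succ_ne_choose (by omega) (by omega)
  simp only [funext_iff, sphereSpec_eq_coclosedSpectrum_add p q hα.ne' hβ.ne' hr,
    sphereSpec_eq_coclosedSpectrum_add p q hα'.ne' hβ'.ne' hr']
  exact comp_div_add_comp_div_eq_iff
    (isLeast_support_coclosedSpectrum _ _) (isLeast_support_coclosedSpectrum _ _)
    (cast_coclosedEigenvalue_ne_zero _ _ _) (cast_coclosedEigenvalue_ne_zero _ _ _) lowest_ne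
    (by positivity) (by positivity) (by positivity) (by positivity)

/-- Satz 4.23 (case `n ≠ 2p`): `F_{αβ,p}` on the sphere of radius `r` and `F_{α'β',p}` on
the sphere of radius `cr` are isospectral iff `(α', β') = (c²α, c²β)`. -/
theorem stmt_18 (n p : ℕ) (hn : 2 ≤ n) (hp : 1 ≤ p) (hpn : p ≤ n - 1) (hn2p : n ≠ 2 * p)
    (α α' β β' r c : ℝ) (hα : 0 < α) (hα' : 0 < α') (hβ : 0 < β) (hβ' : 0 < β')
    (hr : 0 < r) (hc : 0 < c) :
    sphereSpec n p α β r = sphereSpec n p α' β' (c * r) ↔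
      α' = c ^ 2 * α ∧ β' = c ^ 2 * β := by
  have div_sq_eq_iff (t t' : ℝ) : t / r ^ 2 = t' / (c * r) ^ 2 ↔ t' = c ^ 2 * t := by
    field_simp
    exact eq_comm
  rw [sphereSpec_eq_iff hp (by omega) hn2p hα hα' hβ hβ' hr.ne' (by positivity),
    div_sq_eq_iff, div_sq_eq_iff, and_comm]
end

section
/- Let p ≥ 1, set n = 2p, and let α, α', β, β', r, c > 0 be reals. Then S(n,p,α,β,r) = S(n,p,α',β',c·r) (as functions ℝ → ℕ) if and only if {α', β'} = {c²α, c²β} as unordered pairs. -/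
open scoped Classical

/-! The dilates, by scales `a ≠ 0`, of a fixed positive spectrum with bottom eigenvalue `e₀` are
linearly independent over `ℕ`: evaluation at `a * e₀` kills every other dilate of scale at least
`|a|` in absolute value, so the family is triangular with respect to `|a|`. By Hodge duality the
spectrum of `F_{αβ}` on `p`-forms is the exact spectrum in degree `p` at scale `α / r²` plus the
exact spectrum in degree `n - p` at scale `β / r²`. For `n = 2 * p` both are dilates of one
spectrum, so their sum determines the unordered pair of scales. -/

section LinearIndependence

variable {ι R M : Type*} [Semiring R] [AddCommMonoid M] [Module R M] {v : ι → M}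

theorem linearIndependent_of_triangular_dual {Γ : Type*} [LinearOrder Γ] [IsCancelAdd R]
    (rank : ι → Γ) (φ : ι → Module.Dual R M)
    (hzero : ∀ i j, i ≠ j → rank i ≤ rank j → φ i (v j) = 0)
    (hdiag : ∀ i, IsRightRegular (φ i (v i))) : LinearIndependent R v := by
  refine linearIndependent_iff'ₛ.2 fun s f g hfg => ?_
  by_contra! hne
  obtain ⟨i, hi, hmin⟩ := Finset.exists_min_image {i ∈ s | f i ≠ g i} rank
    (by simpa only [Finset.filter_nonempty_iff] using hne)
  obtain ⟨his, hfgi⟩ := Finset.mem_filter.1 hi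
  have hrest : ∑ j ∈ s.erase i, f j * φ i (v j) = ∑ j ∈ s.erase i, g j * φ i (v j) := by
    refine Finset.sum_congr rfl fun j hj => ?_
    obtain ⟨hji, hjs⟩ := Finset.mem_erase.1 hj
    by_cases hfgj : f j = g j
    · rw [hfgj]
    · rw [hzero i j hji.symm (hmin j (Finset.mem_filter.2 ⟨hjs, hfgj⟩)), mul_zero, mul_zero]
  have hφ : ∑ j ∈ s, f j * φ i (v j) = ∑ j ∈ s, g j * φ i (v j) := by
    simpa only [map_sum, map_smul, smul_eq_mul] using congrArg (φ i) hfg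
  rw [← Finset.add_sum_erase s _ his, ← Finset.add_sum_erase s _ his, hrest] at hφ
  exact hfgi (hdiag i (add_right_cancel hφ))

theorem add_eq_add_iff_of_linearIndependent [NeZero (2 : R)] (hv : LinearIndependent R v)
    {i j k l : ι} : v i + v j = v k + v l ↔ (i = k ∧ j = l) ∨ (i = l ∧ j = k) := by
  have : Nontrivial R := nontrivial_of_ne 2 0 two_ne_zero
  have h := hv.eq_iff (a := .single i 1 + .single j 1) (b := .single k 1 + .single l 1)
  simpa [Finsupp.single_add_single_eq_single_add_single, one_add_one_eq_two, two_ne_zero] using h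

end LinearIndependence

section DilatedSpectrum

variable {κ : Type*}

/-- The spectrum, as a multiplicity function on `ℝ`, with the eigenvalue `a * e k` of multiplicity
`m k` for each `k`; multiplicities of coinciding eigenvalues add up. As a `tsum`, it has the junk
value `0` where infinitely many `k` contribute, for instance at `0` if `a = 0`. -/
noncomputable def dilatedSpec (e : κ → ℝ) (m : κ → ℕ) (a x : ℝ) : ℕ :=
  ∑' k, if a * e k = x then m k else 0

variable {e : κ → ℝ} {m : κ → ℕ} {a x : ℝ} {k₀ : κ}

theorem dilatedSpec_eq_zero (h : ∀ k, a * e k ≠ x) : dilatedSpec e m a x = 0 := by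
  simp only [dilatedSpec, h, if_false, tsum_zero]

theorem dilatedSpec_mul_eq (ha : a ≠ 0) (h : ∀ k ≠ k₀, e k ≠ e k₀) :
    dilatedSpec e m a (a * e k₀) = m k₀ := by
  rw [dilatedSpec, tsum_eq_single k₀, if_pos rfl]
  exact fun k hk => if_neg fun heq => h k hk (mul_left_cancel₀ ha heq)

theorem linearIndepOn_dilatedSpec (hpos : 0 < e k₀) (hbot : ∀ k ≠ k₀, e k₀ < e k)
    (hm : m k₀ ≠ 0) : LinearIndepOn ℕ (dilatedSpec e m) {0}ᶜ := by
  refine linearIndependent_of_triangular_dual (fun a => |(a : ℝ)|)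
    (fun a => LinearMap.proj ((a : ℝ) * e k₀)) ?_ ?_
  · rintro ⟨a, ha⟩ ⟨b, hb⟩ hab hle
    refine dilatedSpec_eq_zero fun k heq => ?_
    obtain rfl | hk := eq_or_ne k k₀
    · exact hab (Subtype.ext (mul_right_cancel₀ hpos.ne' heq).symm)
    · have habs : |b| * e k = |a| * e k₀ := by
        simpa only [abs_mul, abs_of_pos hpos, abs_of_pos (hpos.trans (hbot k hk))]
          using congrArg abs heq
      have hlt : |b| * e k₀ < |b| * e k := mul_lt_mul_of_pos_left (hbot k hk) (abs_pos.2 hb)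
      have hle' : |a| * e k₀ ≤ |b| * e k₀ := mul_le_mul_of_nonneg_right hle hpos.le
      exact (hle'.trans_lt hlt).ne' habs
  · rintro ⟨a, ha⟩
    simpa only [LinearMap.proj_apply, dilatedSpec_mul_eq ha fun k hk => (hbot k hk).ne']
      using (IsRegular.of_ne_zero hm).right

end DilatedSpectrum

section ExactSpectrum

/-- The `k`-th eigenvalue of `dδ` on exact `p`-forms on the unit `n`-sphere, `μ(k)` of the paper
for `α = r = 1`. -/
def exactEigenvalue (n p k : ℕ) : ℕ := (k + p) * (k + n - p + 1)

/-- The multiplicity `dim W_k^p` of `exactEigenvalue n p k`. The division is meant for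
`1 ≤ p ≤ n`, where it is exact. -/
def exactMult (n p k : ℕ) : ℕ :=
  ((n + k).factorial * (n + 2 * k + 1)) /
    ((p - 1).factorial * k.factorial * (n - p).factorial * (n + k - p + 1) * (k + p))

/-- The spectrum of `a dδ` on exact `p`-forms on the unit `n`-sphere. -/
noncomputable def exactSpec (n p : ℕ) : ℝ → ℝ → ℕ :=
  dilatedSpec (fun k => (exactEigenvalue n p k : ℝ)) (exactMult n p)

variable {n p : ℕ}

theorem strictMono_exactEigenvalue (n p : ℕ) : StrictMono (exactEigenvalue n p) := fun j k hjk =>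
  Nat.mul_lt_mul_of_lt_of_le (by lia) (by lia) (by lia)

theorem exactEigenvalue_pos (hp : 1 ≤ p) (k : ℕ) : 0 < exactEigenvalue n p k :=
  Nat.mul_pos (by lia) (by lia)

theorem exactMult_zero (hp : 1 ≤ p) (hpn : p ≤ n) : exactMult n p 0 = (n + 1).choose p := by
  obtain ⟨q, rfl⟩ := Nat.exists_eq_add_of_le' hp
  obtain ⟨m, rfl⟩ := Nat.exists_eq_add_of_le hpn
  have hm : q + 1 + m + 1 - (q + 1) = m + 1 := by lia
  rw [Nat.choose_eq_factorial_div_factorial (by lia), hm, exactMult]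
  simp only [add_zero, mul_zero, zero_add, add_tsub_cancel_right, add_tsub_cancel_left,
    Nat.factorial_zero, mul_one, Nat.factorial_succ]
  congr 1 <;> ring

theorem linearIndepOn_exactSpec (hp : 1 ≤ p) (hpn : p ≤ n) :
    LinearIndepOn ℕ (exactSpec n p) {0}ᶜ := by
  refine linearIndepOn_dilatedSpec (k₀ := 0) (Nat.cast_pos.2 (exactEigenvalue_pos hp 0))
    (fun k hk => Nat.cast_lt.2 (strictMono_exactEigenvalue n p (Nat.pos_of_ne_zero hk))) ?_
  rw [exactMult_zero hp hpn]
  exact (Nat.choose_pos (by lia)).ne'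

-- The Hodge star takes coexact `p`-forms to exact `(n - p)`-forms; `V_{k+1}` corresponds to `W_k`.
theorem coexact_eigenvalue_succ (hpn : p < n) (k : ℕ) :
    (k + 1 + p) * (k + 1 + n - p - 1) = exactEigenvalue n (n - p) k := by
  rw [exactEigenvalue, mul_comm]
  congr 1 <;> lia

theorem coexact_mult_succ (hpn : p < n) (k : ℕ) :
    ((n + (k + 1) - 1).factorial * (n + 2 * (k + 1) - 1)) /
        (p.factorial * (k + 1 - 1).factorial * (n - p - 1).factorial * (n + (k + 1) - p - 1) *
          (k + 1 + p)) =
      exactMult n (n - p) k := by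
  have hdual : n - (n - p) = p := by lia
  have hleft : n + (k + 1) - p - 1 = k + (n - p) := by lia
  have hright : n + k - (n - p) + 1 = k + 1 + p := by lia
  rw [exactMult, hdual, hleft, hright, Nat.add_sub_cancel]
  congr 1
  ring

theorem sphereSpec_eq_exactSpec_add_exactSpec (hpn : p < n) (α β r : ℝ) :
    sphereSpec n p α β r = exactSpec n (n - p) (β / r ^ 2) + exactSpec n p (α / r ^ 2) := by
  funext x
  refine congrArg (· + exactSpec n p (α / r ^ 2) x) ?_
  rw [← Nat.succ_injective.tsum_eq]
  · refine tsum_congr fun k => ?_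
    simp only [Nat.succ_eq_add_one, coexact_eigenvalue_succ hpn, coexact_mult_succ hpn,
      Nat.le_add_left, true_and]
  · rw [Function.support_subset_iff', Nat.range_succ]
    intro k hk
    exact if_neg fun h => hk h.1

theorem sphereSpec_two_mul_eq_iff (hp : 1 ≤ p) {α α' β β' r r' : ℝ} (hα : α ≠ 0) (hα' : α' ≠ 0)
    (hβ : β ≠ 0) (hβ' : β' ≠ 0) (hr : r ≠ 0) (hr' : r' ≠ 0) :
    sphereSpec (2 * p) p α β r = sphereSpec (2 * p) p α' β' r' ↔
      (α' / r' ^ 2 = α / r ^ 2 ∧ β' / r' ^ 2 = β / r ^ 2) ∨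
        (α' / r' ^ 2 = β / r ^ 2 ∧ β' / r' ^ 2 = α / r ^ 2) := by
  have hdual : 2 * p - p = p := by lia
  have hne {u s : ℝ} (hu : u ≠ 0) (hs : s ≠ 0) : u / s ^ 2 ∈ ({0}ᶜ : Set ℝ) :=
    div_ne_zero hu (pow_ne_zero 2 hs)
  have hpair := add_eq_add_iff_of_linearIndependent
    (linearIndepOn_exactSpec (n := 2 * p) hp (by lia)).linearIndependent
    (i := ⟨_, hne hα' hr'⟩) (j := ⟨_, hne hβ' hr'⟩) (k := ⟨_, hne hα hr⟩) (l := ⟨_, hne hβ hr⟩)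
  simp only [Subtype.mk.injEq] at hpair
  have hpn : p < 2 * p := by lia
  rw [sphereSpec_eq_exactSpec_add_exactSpec hpn, sphereSpec_eq_exactSpec_add_exactSpec hpn,
    hdual, eq_comm, add_comm, add_comm (exactSpec _ _ (β / r ^ 2)), hpair]

end ExactSpectrum

theorem stmt_19_general (p : ℕ) (hp : 1 ≤ p) (α α' β β' r c : ℝ) (hα : α ≠ 0) (hα' : α' ≠ 0)
    (hβ : β ≠ 0) (hβ' : β' ≠ 0) (hr : r ≠ 0) (hc : c ≠ 0) :
    sphereSpec (2 * p) p α β r = sphereSpec (2 * p) p α' β' (c * r) ↔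
      ((α' = c ^ 2 * α ∧ β' = c ^ 2 * β) ∨ (α' = c ^ 2 * β ∧ β' = c ^ 2 * α)) := by
  have hscale (u v : ℝ) : u / (c * r) ^ 2 = v / r ^ 2 ↔ u = c ^ 2 * v := by
    rw [div_eq_div_iff (by positivity) (by positivity), mul_pow, ← mul_assoc, mul_comm v,
      mul_left_inj' (by positivity)]
  rw [sphereSpec_two_mul_eq_iff hp hα hα' hβ hβ' hr (mul_ne_zero hc hr)]
  simp only [hscale]

/-- Satz 4.23 (case `n = 2p`): `F_{αβ,p}` on the sphere of radius `r` and `F_{α'β',p}` on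
the sphere of radius `cr` are isospectral iff `{α', β'} = {c²α, c²β}` as unordered pairs. -/
theorem stmt_19 (p : ℕ) (hp : 1 ≤ p)
    (α α' β β' r c : ℝ) (hα : 0 < α) (hα' : 0 < α') (hβ : 0 < β) (hβ' : 0 < β')
    (hr : 0 < r) (hc : 0 < c) :
    sphereSpec (2 * p) p α β r = sphereSpec (2 * p) p α' β' (c * r) ↔
      ((α' = c ^ 2 * α ∧ β' = c ^ 2 * β) ∨ (α' = c ^ 2 * β ∧ β' = c ^ 2 * α)) := by
  exact stmt_19_general p hp α α' β β' r c hα.ne' hα'.ne' hβ.ne' hβ'.ne' hr.ne' hc.ne'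
end
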